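/- Let X^n, A^n, B^n be random vectors on finite alphabets with X^n — A^n — B^n a Markov chain, and let Q be uniformly distributed on {1,...,n} and independent of (X^n, A^n, B^n). Then H(A^n) ≥ n · I(X_Q; A^n, B^n, X^{Q-1}, Q) where X_Q denotes the Q-th coordinate of X^n, provided additionally that X^n is an i.i.d. sequence (so that I(X_Q; X^{Q-1}, Q) = 0 terms can be handled); in particular H(A^n) ≥ n · I(X_Q; A_Q, B_Q). -/

import Mathlib

open scoped Classical BigOperators

noncomputable section

namespace Coord

variable {Ω : Type*} [Fintype Ω]

/-- `p` is a probability mass function on the finite sample space `Ω`. -/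
def IsPmf (p : Ω → ℝ) : Prop := (∀ ω, 0 ≤ p ω) ∧ ∑ ω, p ω = 1

/-- Distribution (pmf) of the random variable `X` under `p`. -/
def dist (p : Ω → ℝ) {α : Type*} [Fintype α] (X : Ω → α) (a : α) : ℝ :=
  ∑ ω, if X ω = a then p ω else 0

/-- Shannon entropy (base 2) of `X` under `p`. -/
def H (p : Ω → ℝ) {α : Type*} [Fintype α] (X : Ω → α) : ℝ :=
  -∑ a, dist p X a * Real.logb 2 (dist p X a)

/-- Conditional entropy `H(X | Y)`. -/
def Hc (p : Ω → ℝ) {α β : Type*} [Fintype α] [Fintype β] (X : Ω → α) (Y : Ω → β) : ℝ :=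
  H p (fun ω => (X ω, Y ω)) - H p Y

/-- Mutual information `I(X ; Y)`. -/
def MI (p : Ω → ℝ) {α β : Type*} [Fintype α] [Fintype β] (X : Ω → α) (Y : Ω → β) : ℝ :=
  H p X + H p Y - H p (fun ω => (X ω, Y ω))

/-- Conditional mutual information `I(X ; Y | Z)`. -/
def MIc (p : Ω → ℝ) {α β γ : Type*} [Fintype α] [Fintype β] [Fintype γ]
    (X : Ω → α) (Y : Ω → β) (Z : Ω → γ) : ℝ :=
  H p (fun ω => (X ω, Z ω)) + H p (fun ω => (Y ω, Z ω))
    - H p (fun ω => (X ω, Y ω, Z ω)) - H p Z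

/-- `X` and `Y` are independent under `p`. -/
def Indep (p : Ω → ℝ) {α β : Type*} [Fintype α] [Fintype β] (X : Ω → α) (Y : Ω → β) : Prop :=
  ∀ a b, dist p (fun ω => (X ω, Y ω)) (a, b) = dist p X a * dist p Y b

/-- Markov chain `X - A - B` : `X` and `B` are conditionally independent given `A`. -/
def Markov (p : Ω → ℝ) {α β γ : Type*} [Fintype α] [Fintype β] [Fintype γ]
    (X : Ω → α) (A : Ω → β) (B : Ω → γ) : Prop :=
  ∀ x a b, dist p (fun ω => (X ω, A ω, B ω)) (x, a, b) * dist p A a =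
    dist p (fun ω => (X ω, A ω)) (x, a) * dist p (fun ω => (A ω, B ω)) (a, b)

/-- The random vector `X` is i.i.d. with per-coordinate marginal `p0`. -/
def IID {n : ℕ} (p : Ω → ℝ) {𝒳 : Type*} [Fintype 𝒳] (X : Ω → Fin n → 𝒳) (p0 : 𝒳 → ℝ) : Prop :=
  ∀ x : Fin n → 𝒳, dist p X x = ∏ i, p0 (x i)

/-- The joint pmf on `Ω × Fin n` obtained by adjoining a uniform, independent time index `Q`. -/
def unif {n : ℕ} (p : Ω → ℝ) : Ω × Fin n → ℝ := fun ωq => p ωq.1 / n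

/-- The strict prefix `X^{q-1}` of a random vector, padded with `none`. -/
def pre {n : ℕ} {𝒳 : Type*} (X : Ω → Fin n → 𝒳) (q : Fin n) : Ω → Fin n → Option 𝒳 :=
  fun ω i => if (i : ℕ) < (q : ℕ) then some (X ω i) else none

end Coord

open Coord

namespace Coord

lemma dist_nonneg' {Ω : Type*} [Fintype Ω] {p : Ω → ℝ} (hp : ∀ ω, 0 ≤ p ω)
    {α : Type*} [Fintype α] (X : Ω → α) (a : α) : 0 ≤ dist p X a := by
  unfold dist
  exact Finset.sum_nonneg fun ω _ => by split_ifs <;> simp [hp]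

lemma le_dist {Ω : Type*} [Fintype Ω] {p : Ω → ℝ} (hp : ∀ ω, 0 ≤ p ω)
    {α : Type*} [Fintype α] (X : Ω → α) (ω : Ω) : p ω ≤ dist p X (X ω) := by
  unfold dist
  have := Finset.single_le_sum (f := fun ω' => if X ω' = X ω then p ω' else 0)
    (fun ω' _ => by split_ifs <;> simp [hp]) (Finset.mem_univ ω)
  simpa using this

lemma sum_dist {Ω : Type*} [Fintype Ω] (p : Ω → ℝ)
    {α : Type*} [Fintype α] (X : Ω → α) (F : α → ℝ) :
    ∑ a, dist p X a * F a = ∑ ω, p ω * F (X ω) := by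
  unfold dist
  simp_rw [Finset.sum_mul]
  rw [Finset.sum_comm]
  refine Finset.sum_congr rfl fun ω _ => ?_
  simp [ite_mul]

lemma H_eq {Ω : Type*} [Fintype Ω] (p : Ω → ℝ)
    {α : Type*} [Fintype α] (X : Ω → α) :
    H p X = -∑ ω, p ω * Real.logb 2 (dist p X (X ω)) := by
  unfold H
  rw [sum_dist p X (fun a => Real.logb 2 (dist p X a))]

lemma H_congr {Ω : Type*} [Fintype Ω] (p : Ω → ℝ)
    {α β : Type*} [Fintype α] [Fintype β] (X : Ω → α) (Y : Ω → β)
    (h : ∀ ω ω', X ω = X ω' ↔ Y ω = Y ω') : H p X = H p Y := by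
  rw [H_eq, H_eq]
  congr 1
  refine Finset.sum_congr rfl fun ω _ => ?_
  congr 2
  unfold dist
  refine Finset.sum_congr rfl fun ω' _ => ?_
  simp only [h]

lemma H_mono {Ω : Type*} [Fintype Ω] {p : Ω → ℝ} (hp : ∀ ω, 0 ≤ p ω)
    {α β : Type*} [Fintype α] [Fintype β] (X : Ω → α) (Y : Ω → β)
    (h : ∀ ω ω', X ω = X ω' → Y ω = Y ω') : H p Y ≤ H p X := by
  rw [H_eq, H_eq]
  apply neg_le_neg
  refine Finset.sum_le_sum fun ω _ => ?_
  rcases (hp ω).eq_or_lt with h0 | h0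
  · simp [← h0]
  refine mul_le_mul_of_nonneg_left ?_ (hp ω)
  refine Real.logb_le_logb_of_le (by norm_num) (h0.trans_le (le_dist hp X ω)) ?_
  unfold dist
  refine Finset.sum_le_sum fun ω' _ => ?_
  by_cases h1 : X ω' = X ω
  · simp [h1, h _ _ h1]
  · simp only [h1, if_false]
    split_ifs <;> simp [hp]

lemma dist_fst_sum {Ω : Type*} [Fintype Ω] (p : Ω → ℝ)
    {α β : Type*} [Fintype α] [Fintype β] (X : Ω → α) (Y : Ω → β) (b : β) :
    ∑ a, dist p (fun ω => (X ω, Y ω)) (a, b) = dist p Y b := by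
  unfold dist
  rw [Finset.sum_comm]
  refine Finset.sum_congr rfl fun ω _ => ?_
  by_cases h : Y ω = b <;> simp [h]

lemma MI_dpi {Ω : Type*} [Fintype Ω] {p : Ω → ℝ} (hp : IsPmf p)
    {α β γ : Type*} [Fintype α] [Fintype β] [Fintype γ]
    (X : Ω → α) (Y : Ω → β) (f : β → γ) :
    MI p X (fun ω => f (Y ω)) ≤ MI p X Y := by
  have h0 := hp.1
  set dY := dist p Y with hdY
  set dXY := dist p (fun ω => (X ω, Y ω)) with hdXY
  set dF := dist p (fun ω => f (Y ω)) with hdF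
  set dXF := dist p (fun ω => (X ω, f (Y ω))) with hdXF
  have key : ∑ ω, p ω * (dY (Y ω) * dXF (X ω, f (Y ω)) / (dXY (X ω, Y ω) * dF (f (Y ω)))) ≤ 1 := by
    rw [← sum_dist p (fun ω => (X ω, Y ω))
      (fun z => dY z.2 * dXF (z.1, f z.2) / (dXY (z.1, z.2) * dF (f z.2)))]
    calc _ ≤ ∑ z : α × β, dY z.2 * dXF (z.1, f z.2) / dF (f z.2) := by
          refine Finset.sum_le_sum fun z _ => ?_
          obtain ⟨x, y⟩ := z
          change dXY (x, y) * _ ≤ _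
          have a1 : 0 ≤ dXY (x, y) := dist_nonneg' h0 _ _
          have a2 : 0 ≤ dY y * dXF (x, f y) / dF (f y) :=
            div_nonneg (mul_nonneg (dist_nonneg' h0 _ _) (dist_nonneg' h0 _ _))
              (dist_nonneg' h0 _ _)
          rcases a1.eq_or_lt with h | h
          · rw [← h]; simpa using a2
          · apply le_of_eq
            dsimp only
            rw [← div_div, div_right_comm, mul_div_cancel₀ _ h.ne']
      _ = ∑ y, dY y * (dF (f y) / dF (f y)) := by
          rw [Fintype.sum_prod_type, Finset.sum_comm]
          refine Finset.sum_congr rfl fun y _ => ?_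
          dsimp only
          rw [← Finset.sum_div, ← Finset.mul_sum, hdXF, dist_fst_sum, mul_div_assoc]
      _ ≤ ∑ y, dY y * 1 := by
          refine Finset.sum_le_sum fun y _ => ?_
          exact mul_le_mul_of_nonneg_left (div_self_le_one _) (dist_nonneg' h0 _ _)
      _ = 1 := by
          rw [hdY, sum_dist p Y (fun _ => 1)]; simpa using hp.2
  have key2 : ∑ ω, p ω * (Real.logb 2 (dY (Y ω)) + Real.logb 2 (dXF (X ω, f (Y ω)))
      - Real.logb 2 (dXY (X ω, Y ω)) - Real.logb 2 (dF (f (Y ω)))) ≤ 0 := by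
    have hl : 0 < Real.log 2 := Real.log_pos (by norm_num)
    calc _ ≤ ∑ ω, p ω * ((dY (Y ω) * dXF (X ω, f (Y ω)) /
              (dXY (X ω, Y ω) * dF (f (Y ω))) - 1) / Real.log 2) := by
          refine Finset.sum_le_sum fun ω _ => ?_
          rcases (h0 ω).eq_or_lt with h | h
          · simp [← h]
          refine mul_le_mul_of_nonneg_left ?_ (h0 ω)
          have b1 : 0 < dY (Y ω) := h.trans_le (le_dist h0 Y ω)
          have b2 : 0 < dXF (X ω, f (Y ω)) := h.trans_le (le_dist h0 (fun ω => (X ω, f (Y ω))) ω)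
          have b3 : 0 < dXY (X ω, Y ω) := h.trans_le (le_dist h0 (fun ω => (X ω, Y ω)) ω)
          have b4 : 0 < dF (f (Y ω)) := h.trans_le (le_dist h0 (fun ω => f (Y ω)) ω)
          have := Real.log_le_sub_one_of_pos (div_pos (mul_pos b1 b2) (mul_pos b3 b4))
          rw [← Real.logb_mul b1.ne' b2.ne', sub_sub, ← Real.logb_mul b3.ne' b4.ne',
            ← Real.logb_div (mul_pos b1 b2).ne' (mul_pos b3 b4).ne', Real.logb]
          exact div_le_div_of_nonneg_right this hl.le
      _ = (∑ ω, p ω * (dY (Y ω) * dXF (X ω, f (Y ω)) / (dXY (X ω, Y ω) * dF (f (Y ω))))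
            - ∑ ω, p ω) / Real.log 2 := by
          rw [← Finset.sum_sub_distrib, Finset.sum_div]
          exact Finset.sum_congr rfl fun ω _ => by ring
      _ ≤ 0 := by
          rw [hp.2]
          exact div_nonpos_of_nonpos_of_nonneg (by linarith) hl.le
  simp only [mul_add, mul_sub, Finset.sum_add_distrib, Finset.sum_sub_distrib] at key2
  unfold MI
  rw [H_eq p Y, H_eq p (fun ω => f (Y ω)), H_eq p (fun ω => (X ω, Y ω)),
    H_eq p (fun ω => (X ω, f (Y ω)))]
  linarith

lemma markov_H {Ω : Type*} [Fintype Ω] {p : Ω → ℝ} (h0 : ∀ ω, 0 ≤ p ω)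
    {α β γ : Type*} [Fintype α] [Fintype β] [Fintype γ]
    (X : Ω → α) (A : Ω → β) (B : Ω → γ) (hM : Markov p X A B) :
    H p (fun ω => (X ω, A ω, B ω)) + H p A =
      H p (fun ω => (X ω, A ω)) + H p (fun ω => (A ω, B ω)) := by
  simp only [H_eq]
  rw [← neg_add, ← neg_add, ← Finset.sum_add_distrib, ← Finset.sum_add_distrib]
  congr 1
  refine Finset.sum_congr rfl fun ω _ => ?_
  rcases (h0 ω).eq_or_lt with h | h
  · simp [← h]
  rw [← mul_add, ← mul_add]
  congr 1
  rw [← Real.logb_mul, ← Real.logb_mul, hM]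
  · exact (h.trans_le (le_dist h0 (fun ω => (X ω, A ω)) ω)).ne'
  · exact (h.trans_le (le_dist h0 (fun ω => (A ω, B ω)) ω)).ne'
  · exact (h.trans_le (le_dist h0 (fun ω => (X ω, A ω, B ω)) ω)).ne'
  · exact (h.trans_le (le_dist h0 A ω)).ne'

lemma unif_pmf {Ω : Type*} [Fintype Ω] {p : Ω → ℝ} (hp : IsPmf p) {n : ℕ} (hn : 0 < n) :
    IsPmf (unif (n := n) p) := by
  have : (n : ℝ) ≠ 0 := by positivity
  refine ⟨fun ω => div_nonneg (hp.1 _) (Nat.cast_nonneg _), ?_⟩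
  unfold unif
  rw [Fintype.sum_prod_type]
  simp only [Finset.sum_const, Finset.card_univ, Fintype.card_fin, nsmul_eq_mul]
  rw [← hp.2]
  refine Finset.sum_congr rfl fun ω _ => ?_
  field_simp

lemma H_unif {Ω : Type*} [Fintype Ω] {p : Ω → ℝ} (hp : IsPmf p) {n : ℕ} (hn : 0 < n)
    {α : Type*} [Fintype α] (Z : Fin n → Ω → α) :
    n * H (unif (n := n) p) (fun w => (Z w.2 w.1, w.2)) =
      ∑ q, H p (Z q) + n * Real.logb 2 n := by
  have hn' : (n : ℝ) ≠ 0 := by positivity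
  have hd : ∀ (z : α) (q : Fin n),
      dist (unif (n := n) p) (fun w => (Z w.2 w.1, w.2)) (z, q) = dist p (Z q) z / n := by
    intro z q
    unfold dist unif
    rw [Fintype.sum_prod_type, Finset.sum_div]
    refine Finset.sum_congr rfl fun ω _ => ?_
    rw [Finset.sum_eq_single q]
    · simp [ite_div]
    · intro b _ hb; simp [hb]
    · simp
  rw [H_eq]
  simp only [hd, H_eq]
  rw [Fintype.sum_prod_type, Finset.sum_comm, ← Finset.sum_neg_distrib, Finset.mul_sum]
  have : (n : ℝ) * Real.logb 2 n = ∑ q : Fin n, Real.logb 2 n := by simp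
  rw [this, ← Finset.sum_add_distrib]
  refine Finset.sum_congr rfl fun q _ => ?_
  have : Real.logb 2 (n : ℝ) = ∑ ω, p ω * Real.logb 2 n := by
    rw [← Finset.sum_mul, hp.2, one_mul]
  rw [this, ← Finset.sum_neg_distrib, ← Finset.sum_neg_distrib, Finset.mul_sum,
    ← Finset.sum_add_distrib]
  refine Finset.sum_congr rfl fun ω _ => ?_
  dsimp only [unif]
  rcases (hp.1 ω).eq_or_lt with h | h
  · simp [← h]
  rw [Real.logb_div (h.trans_le (le_dist hp.1 (Z q) ω)).ne' hn']
  field_simp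
  ring

lemma iid_abs {Ω : Type*} [Fintype Ω] {p : Ω → ℝ} (hp : IsPmf p) {n : ℕ}
    {𝒳 : Type*} [Fintype 𝒳] (X : Ω → Fin n → 𝒳) (p0 : 𝒳 → ℝ) (h : IID p X p0) :
    IID p X (fun a => |p0 a|) := by
  intro x
  rw [← Finset.abs_prod, ← h x, abs_of_nonneg (dist_nonneg' hp.1 _ _)]

lemma iid_sum {Ω : Type*} [Fintype Ω] {p : Ω → ℝ} (hp : IsPmf p) {n : ℕ} (hn : 0 < n)
    {𝒳 : Type*} [Fintype 𝒳] (X : Ω → Fin n → 𝒳) (p0 : 𝒳 → ℝ) (h : IID p X p0)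
    (hpos : ∀ a, 0 ≤ p0 a) : ∑ a, p0 a = 1 := by
  have h1 : ∑ x, dist p X x = 1 := by
    have := sum_dist p X (fun _ => 1)
    simpa [hp.2] using this
  have h2 : (∑ a, p0 a) ^ n = 1 := by
    rw [← h1]
    have := Finset.prod_univ_sum (fun _ : Fin n => (Finset.univ : Finset 𝒳)) (fun _ a => p0 a)
    simp only [Finset.prod_const, Finset.card_univ, Fintype.card_fin,
      Fintype.piFinset_univ] at this
    rw [this]
    exact Finset.sum_congr rfl fun x _ => (h x).symm
  exact (pow_eq_one_iff_of_nonneg (Finset.sum_nonneg fun a _ => hpos a) hn.ne').1 h2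

lemma iid_marg {Ω : Type*} [Fintype Ω] {p : Ω → ℝ} {n : ℕ}
    {𝒳 : Type*} [Fintype 𝒳] (X : Ω → Fin n → 𝒳) (p0 : 𝒳 → ℝ) (h : IID p X p0)
    (hs : ∑ a, p0 a = 1) (i : Fin n) (a : 𝒳) : dist p (fun ω => X ω i) a = p0 a := by
  have h1 : dist p (fun ω => X ω i) a = ∑ x, dist p X x * (if x i = a then 1 else 0) := by
    rw [sum_dist p X (fun x => if x i = a then 1 else 0)]
    unfold dist
    exact Finset.sum_congr rfl fun ω _ => by simp
  have := Finset.prod_univ_sum (fun _ : Fin n => (Finset.univ : Finset 𝒳))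
    (fun j b => p0 b * (if j = i then (if b = a then 1 else 0) else 1))
  rw [Fintype.piFinset_univ] at this
  rw [h1]
  calc _ = ∑ x : Fin n → 𝒳, ∏ j, (p0 (x j) * (if j = i then (if x j = a then 1 else 0) else 1)) := by
        refine Finset.sum_congr rfl fun x _ => ?_
        rw [h x, Finset.prod_mul_distrib]
        congr 1
        rw [Finset.prod_ite_eq' Finset.univ i (fun j => if x j = a then (1:ℝ) else 0)]
        simp
    _ = _ := this.symm
    _ = p0 a := by
        rw [Finset.prod_eq_single i]
        · simp
        · intro j _ hj; simp [hj, hs]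
        · simp

lemma iid_H {Ω : Type*} [Fintype Ω] {p : Ω → ℝ} (hp : IsPmf p) {n : ℕ} (hn : 0 < n)
    {𝒳 : Type*} [Fintype 𝒳] (X : Ω → Fin n → 𝒳) (p0 : 𝒳 → ℝ) (h : IID p X p0) :
    n * H (unif (n := n) p) (fun w => X w.1 w.2) = H p X := by
  have hn' : (n : ℝ) ≠ 0 := by positivity
  have h' := iid_abs hp X p0 h
  generalize hg : (fun a => |p0 a|) = r at h'
  have hr : ∀ a, 0 ≤ r a := fun a => by rw [← hg]; exact abs_nonneg _
  have hs := iid_sum hp hn X r h' hr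
  have hm := iid_marg X r h' hs
  have hd : ∀ a, dist (unif (n := n) p) (fun w => X w.1 w.2) a = r a := by
    intro a
    have : dist (unif (n := n) p) (fun w => X w.1 w.2) a
        = ∑ q : Fin n, dist p (fun ω => X ω q) a / n := by
      unfold dist unif
      rw [Fintype.sum_prod_type, Finset.sum_comm]
      refine Finset.sum_congr rfl fun q _ => ?_
      rw [Finset.sum_div]
      exact Finset.sum_congr rfl fun ω _ => by simp [ite_div]
    rw [this]
    simp only [hm, Finset.sum_const, Finset.card_univ, Fintype.card_fin, nsmul_eq_mul]
    field_simp
  rw [H_eq, H_eq]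
  simp only [hd]
  rw [Fintype.sum_prod_type, mul_neg, Finset.mul_sum]
  congr 1
  refine Finset.sum_congr rfl fun ω _ => ?_
  dsimp only [unif]
  rcases (hp.1 ω).eq_or_lt with h0 | h0
  · simp [← h0]
  have hne := (h0.trans_le (le_dist hp.1 X ω)).ne'
  rw [h'] at hne ⊢
  rw [Real.logb_prod _ _ (fun i hi => (Finset.prod_ne_zero_iff.1 hne) i hi), ← Finset.mul_sum]
  field_simp

/-- Main identity plus the Markov bound. -/
lemma main_bound {Ω 𝒳 𝒜 ℬ : Type*} [Fintype Ω] [Fintype 𝒳] [Fintype 𝒜] [Fintype ℬ]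
    {n : ℕ} (hn : 0 < n) (p : Ω → ℝ) (hp : IsPmf p) (p0 : 𝒳 → ℝ)
    (X : Ω → Fin n → 𝒳) (A : Ω → Fin n → 𝒜) (B : Ω → Fin n → ℬ)
    (hM : Markov p X A B) (hiid : IID p X p0) :
    H p A ≥ n * MI (unif p)
        (fun ωq => X ωq.1 ωq.2)
        (fun ωq => (A ωq.1, B ωq.1, pre X ωq.2 ωq.1, ωq.2)) := by
  let P : ℕ → Ω → (Fin n → 𝒜) × (Fin n → ℬ) × (Fin n → Option 𝒳) := fun k ω =>
    (A ω, B ω, fun i => if (i : ℕ) < k then some (X ω i) else none)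
  have e1 : H (unif (n := n) p) (fun ωq => (A ωq.1, B ωq.1, pre X ωq.2 ωq.1, ωq.2))
      = H (unif (n := n) p) (fun w => (P w.2 w.1, w.2)) := by
    apply H_congr
    intro w w'
    unfold pre
    simp only [P, Prod.mk.injEq, and_assoc]
  have e2 : H (unif (n := n) p)
        (fun ωq => (X ωq.1 ωq.2, (A ωq.1, B ωq.1, pre X ωq.2 ωq.1, ωq.2)))
      = H (unif (n := n) p) (fun w => (P (w.2 + 1) w.1, w.2)) := by
    apply H_congr
    rintro ⟨ω, q⟩ ⟨ω', q'⟩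
    unfold pre
    simp only [P, Prod.mk.injEq]
    constructor
    · rintro ⟨h1, h2, h3, h4, rfl⟩
      refine ⟨⟨h2, h3, ?_⟩, rfl⟩
      funext i
      have := congrFun h4 i
      by_cases hi : (i : ℕ) < q
      · simpa [hi, Nat.lt_succ_of_lt hi] using this
      · by_cases hq : i = q
        · subst hq; simp [h1]
        · have : ¬ (i : ℕ) < q + 1 := by
            intro hh; exact hq (Fin.ext (by omega))
          simp [this]
    · rintro ⟨⟨h2, h3, h4⟩, rfl⟩
      refine ⟨?_, h2, h3, ?_, rfl⟩
      · simpa using congrFun h4 q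
      · funext i
        have := congrFun h4 i
        by_cases hi : (i : ℕ) < q
        · simpa [hi, Nat.lt_succ_of_lt hi] using this
        · simp [hi]
  have e3 := H_unif hp hn (fun q : Fin n => P q)
  have e4 := H_unif hp hn (fun q : Fin n => P (q + 1))
  have e5 : ∑ q : Fin n, H p (P (q + 1)) - ∑ q : Fin n, H p (P q) = H p (P n) - H p (P 0) := by
    rw [← Finset.sum_sub_distrib,
      Fin.sum_univ_eq_sum_range (fun k => H p (P (k + 1)) - H p (P k)) n,
      Finset.sum_range_sub (fun k => H p (P k))]
  have e6 : H p (P 0) = H p (fun ω => (A ω, B ω)) := by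
    apply H_congr; intro ω ω'; simp [P]
  have e7 : H p (P n) = H p (fun ω => (X ω, A ω, B ω)) := by
    apply H_congr; intro ω ω'
    simp only [P, Fin.is_lt, if_true, Prod.mk.injEq, funext_iff, Option.some.injEq]
    tauto
  have e8 := markov_H hp.1 X A B hM
  have e9 := iid_H hp hn X p0 hiid
  have e10 : H p X ≤ H p (fun ω => (X ω, A ω)) := by
    apply H_mono hp.1; intro ω ω' h; exact (Prod.mk.inj h).1
  unfold MI
  rw [e1, e2, mul_sub, mul_add]
  linarith

end Coord

open Coord
/-- With `X^n` i.i.d., `X^n — A^n — B^n` Markov, and `Q` uniform and independent,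
`H(A^n) ≥ n·I(X_Q; A^n, B^n, X^{Q-1}, Q)`; in particular `H(A^n) ≥ n·I(X_Q; A_Q, B_Q)`. -/
theorem stmt1 {Ω 𝒳 𝒜 ℬ : Type*} [Fintype Ω] [Fintype 𝒳] [Fintype 𝒜] [Fintype ℬ]
    {n : ℕ} (hn : 0 < n) (p : Ω → ℝ) (hp : IsPmf p) (p0 : 𝒳 → ℝ)
    (X : Ω → Fin n → 𝒳) (A : Ω → Fin n → 𝒜) (B : Ω → Fin n → ℬ)
    (hM : Markov p X A B) (hiid : IID p X p0) :
    H p A ≥ n * MI (unif p)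
        (fun ωq => X ωq.1 ωq.2)
        (fun ωq => (A ωq.1, B ωq.1, pre X ωq.2 ωq.1, ωq.2)) ∧
    H p A ≥ n * MI (unif p)
        (fun ωq => X ωq.1 ωq.2)
        (fun ωq => (A ωq.1 ωq.2, B ωq.1 ωq.2)) := by
  have h := main_bound hn p hp p0 X A B hM hiid
  refine ⟨h, le_trans ?_ h⟩
  refine mul_le_mul_of_nonneg_left ?_ (Nat.cast_nonneg n)
  exact MI_dpi (unif_pmf hp hn) (fun ωq : Ω × Fin n => X ωq.1 ωq.2)
    (fun ωq => (A ωq.1, B ωq.1, pre X ωq.2 ωq.1, ωq.2))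
    (fun y => (y.1 y.2.2.2, y.2.1 y.2.2.2))
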